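/- In the concrete quasi-free CAR model with past P = {n ∈ ℤ : n < 0} and future F = {n ∈ ℤ : n ≥ 0}: assume there is ε ∈ (0,1/2) with ε ≤ λ_l ≤ 1−ε and λ_l ≠ 1/2 for all l ∈ ℤ. Let S := {a_l : l ∈ ℤ} ∪ {a_l* : l ∈ ℤ} ⊆ B(H), and denote by S′ its commutant in B(H) and S″ the commutant of S′. Suppose T ∈ B(H) satisfies T∘a_l = a_l∘T and T∘a_l* = a_l*∘T for every l ∈ F, and T ∈ S″. Then TΩ belongs to the closed linear span of {e_{(A,B)} : A ⊆ P, B ⊆ P finite, card A ≡ card B (mod 2)}. (S″ is the quasi-free CAR factor M_R and the hypothesis says T ∈ α_t(M_R)′ ∩ M_R.) -/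

import Mathlib

/- The concrete quasi-free CAR model: `H = ℓ²(Finset ℤ × Finset ℤ)` with orthonormal basis
`e (A, B)`, vacuum `Ω = e (∅, ∅)`, and operators `a l`, `b l`, `G` given on the basis by the
quasi-free formulas with symbol `λ` (diagonal, `R h_l = λ_l h_l`). -/

noncomputable section

/-- The GNS Hilbert space: `ℓ²` over pairs of finite subsets of `ℤ`. -/
abbrev CARSpace := lp (fun _ : Finset ℤ × Finset ℤ => ℂ) 2

/-- The orthonormal basis vector `e_{(A,B)}`. -/
def carE (p : Finset ℤ × Finset ℤ) : CARSpace := lp.single 2 p 1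

/-- The vacuum vector `Ω = e_{(∅,∅)}`. -/
def carΩ : CARSpace := carE (∅, ∅)

/-- `n(l, X)` = number of elements of `X` strictly below `l`. -/
def nlt (l : ℤ) (X : Finset ℤ) : ℕ := (X.filter fun j => j < l).card

/-- `a` is the family of quasi-free annihilation-type operators `a_l = π_R(a(h_l))`:
`a_l e_{(A,B)} = √(1−λ_l)·(−1)^{|B|}·(−1)^{n(l,A)}·[l ∉ A]·e_{(A∪{l},B)}
              + √(λ_l)·(−1)^{n(l,B)}·[l ∈ B]·e_{(A,B∖{l})}`. -/
def IsCAR_a (lam : ℤ → ℝ) (a : ℤ → CARSpace →L[ℂ] CARSpace) : Prop :=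
  ∀ (l : ℤ) (A B : Finset ℤ),
    a l (carE (A, B)) =
      ((Real.sqrt (1 - lam l) : ℂ) * (-1) ^ B.card * (-1) ^ nlt l A *
          (if l ∈ A then 0 else 1)) • carE (insert l A, B) +
      ((Real.sqrt (lam l) : ℂ) * (-1) ^ nlt l B *
          (if l ∈ B then 1 else 0)) • carE (A, B.erase l)

/-- `b` is the family of commutant quasi-free operators:
`b_l e_{(A,B)} = √(λ_l)·(−1)^{|B|}·(−1)^{n(l,A)}·[l ∉ A]·e_{(A∪{l},B)}
              − √(1−λ_l)·(−1)^{n(l,B)}·[l ∈ B]·e_{(A,B∖{l})}`. -/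
def IsCAR_b (lam : ℤ → ℝ) (b : ℤ → CARSpace →L[ℂ] CARSpace) : Prop :=
  ∀ (l : ℤ) (A B : Finset ℤ),
    b l (carE (A, B)) =
      ((Real.sqrt (lam l) : ℂ) * (-1) ^ B.card * (-1) ^ nlt l A *
          (if l ∈ A then 0 else 1)) • carE (insert l A, B) -
      ((Real.sqrt (1 - lam l) : ℂ) * (-1) ^ nlt l B *
          (if l ∈ B then 1 else 0)) • carE (A, B.erase l)

/-- `G = Γ⊗Γ` : `G e_{(A,B)} = (−1)^{|A|+|B|} e_{(A,B)}`. -/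
def IsCAR_G (G : CARSpace →L[ℂ] CARSpace) : Prop :=
  ∀ (A B : Finset ℤ), G (carE (A, B)) = ((-1 : ℂ) ^ (A.card + B.card)) • carE (A, B)

/-- The "past" subspace: closed linear span of the `e_{(A,B)}` with `A, B ⊆ P = {n < 0}`
and `card A ≡ card B (mod 2)`. -/
def pastSpan : Set CARSpace :=
  closure (Submodule.span ℂ
    {v : CARSpace | ∃ A B : Finset ℤ,
      (∀ n ∈ A, n < 0) ∧ (∀ n ∈ B, n < 0) ∧ A.card % 2 = B.card % 2 ∧ v = carE (A, B)} :
    Set CARSpace)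

open scoped symmDiff ComplexConjugate

/-- Configurations: pairs of finite sets of occupied sites. -/
abbrev CARConfig := Finset ℤ × Finset ℤ

/-- Flip the occupation of a mode; `inl l` is site `l` of the first component, `inr l` of the
second. -/
def flipMode : ℤ ⊕ ℤ → CARConfig → CARConfig
  | .inl l, p => (p.1 ∆ {l}, p.2)
  | .inr l, p => (p.1, p.2 ∆ {l})

/-- A mode is occupied in a configuration. -/
def occupied : ℤ ⊕ ℤ → CARConfig → Prop
  | .inl l, p => l ∈ p.1
  | .inr l, p => l ∈ p.2

/-- The Jordan–Wigner sign of a mode in a configuration. -/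
def jwSign : ℤ ⊕ ℤ → CARConfig → ℂ
  | .inl l, p => (-1) ^ p.2.card * (-1) ^ nlt l p.1
  | .inr l, p => (-1) ^ nlt l p.2

/-- The parity of the number of occupied modes. -/
def paritySign (p : CARConfig) : ℂ := (-1) ^ (p.1.card + p.2.card)

lemma flipMode_flipMode (i : ℤ ⊕ ℤ) (p : CARConfig) : flipMode i (flipMode i p) = p := by
  cases i <;> simp [flipMode, symmDiff_symmDiff_cancel_right]

lemma flipMode_comm (i j : ℤ ⊕ ℤ) (p : CARConfig) :
    flipMode i (flipMode j p) = flipMode j (flipMode i p) := by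
  cases i <;> cases j <;> simp [flipMode, symmDiff_right_comm]

lemma occupied_flipMode_self (i : ℤ ⊕ ℤ) (p : CARConfig) :
    occupied i (flipMode i p) ↔ ¬ occupied i p := by
  cases i <;> simp [flipMode, occupied, Finset.mem_symmDiff]

lemma occupied_flipMode_of_ne {i j : ℤ ⊕ ℤ} (hij : i ≠ j) (p : CARConfig) :
    occupied i (flipMode j p) ↔ occupied i p := by
  cases i <;> cases j <;> simp_all [flipMode, occupied, Finset.mem_symmDiff]

lemma symmDiff_singleton_of_mem {l : ℤ} {X : Finset ℤ} (h : l ∈ X) : X ∆ {l} = X.erase l := by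
  ext x; by_cases hx : x = l <;> simp_all [Finset.mem_symmDiff]

lemma symmDiff_singleton_of_notMem {l : ℤ} {X : Finset ℤ} (h : l ∉ X) :
    X ∆ {l} = insert l X := by
  ext x; by_cases hx : x = l <;> simp_all [Finset.mem_symmDiff]

lemma neg_one_pow_card_symmDiff_singleton (l : ℤ) (X : Finset ℤ) :
    (-1 : ℂ) ^ (X ∆ {l}).card = -(-1) ^ X.card := by
  by_cases h : l ∈ X
  · rw [symmDiff_singleton_of_mem h, ← Finset.card_erase_add_one h, pow_succ]; ring
  · rw [symmDiff_singleton_of_notMem h, Finset.card_insert_of_notMem h, pow_succ]; ring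

lemma neg_one_pow_nlt_symmDiff_singleton (k l : ℤ) (X : Finset ℤ) :
    (-1 : ℂ) ^ nlt k (X ∆ {l}) = (if l < k then -1 else 1) * (-1) ^ nlt k X := by
  unfold nlt
  split_ifs with h
  · have : (X ∆ {l}).filter (· < k) = (X.filter (· < k)) ∆ {l} := by
      ext x; by_cases hx : x = l <;> simp_all [Finset.mem_symmDiff]
    rw [this, neg_one_pow_card_symmDiff_singleton]; ring
  · have : (X ∆ {l}).filter (· < k) = X.filter (· < k) := by
      ext x; by_cases hx : x = l <;> simp_all [Finset.mem_symmDiff]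
    rw [this, one_mul]

lemma neg_one_pow_mul_self (n : ℕ) : (-1 : ℂ) ^ n * (-1) ^ n = 1 := by
  rw [← mul_pow]; simp

lemma jwSign_mul_self (i : ℤ ⊕ ℤ) (p : CARConfig) : jwSign i p * jwSign i p = 1 := by
  cases i <;> simp only [jwSign]
  · rw [mul_mul_mul_comm, neg_one_pow_mul_self, neg_one_pow_mul_self, one_mul]
  · exact neg_one_pow_mul_self _

lemma conj_jwSign (i : ℤ ⊕ ℤ) (p : CARConfig) : conj (jwSign i p) = jwSign i p := by
  cases i <;> simp [jwSign]

lemma norm_jwSign (i : ℤ ⊕ ℤ) (p : CARConfig) : ‖jwSign i p‖ = 1 := by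
  cases i <;> simp [jwSign]

lemma jwSign_flipMode_self (i : ℤ ⊕ ℤ) (p : CARConfig) :
    jwSign i (flipMode i p) = jwSign i p := by
  cases i <;> simp [jwSign, flipMode, neg_one_pow_nlt_symmDiff_singleton]

lemma jwSign_mul_jwSign_flipMode {i j : ℤ ⊕ ℤ} (hij : i ≠ j) (p : CARConfig) :
    jwSign i p * jwSign j (flipMode i p) = -(jwSign j p * jwSign i (flipMode j p)) := by
  rcases i with k | k <;> rcases j with l | l <;>
    simp only [jwSign, flipMode, neg_one_pow_nlt_symmDiff_singleton,
      neg_one_pow_card_symmDiff_singleton]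
  · have hkl : k ≠ l := fun h => hij (by rw [h])
    rcases lt_or_gt_of_ne hkl with h | h <;> simp only [h, h.not_gt, if_true, if_false] <;> ring
  · ring
  · ring
  · have hkl : k ≠ l := fun h => hij (by rw [h])
    rcases lt_or_gt_of_ne hkl with h | h <;> simp only [h, h.not_gt, if_true, if_false] <;> ring

lemma paritySign_flipMode (i : ℤ ⊕ ℤ) (p : CARConfig) :
    paritySign (flipMode i p) = -paritySign p := by
  cases i <;> simp [paritySign, flipMode, pow_add, neg_one_pow_card_symmDiff_singleton]

lemma paritySign_eq_one_or (p : CARConfig) : paritySign p = 1 ∨ paritySign p = -1 :=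
  neg_one_pow_eq_or ℂ _

/-! ### Weighted involutions on `ℓ²` -/

lemma memℓp_weighted_comp {w : CARConfig → ℂ} (hw : ∀ p, ‖w p‖ ≤ 1)
    (σ : Equiv.Perm CARConfig) (v : CARSpace) :
    Memℓp (fun p => w p * v (σ p)) 2 := by
  have hv := (lp.memℓp v).summable (by norm_num)
  refine memℓp_gen (.of_nonneg_of_le (fun p => by positivity) (fun p => ?_)
    (hv.comp_injective σ.injective))
  simp only [Function.comp, norm_mul]
  gcongr
  exact mul_le_of_le_one_left (norm_nonneg _) (hw p)

/-- The contraction `(X v)(p) = w p * v (σ p)` for a weight `w` bounded by one. -/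
def weightedComp (w : CARConfig → ℂ) (hw : ∀ p, ‖w p‖ ≤ 1) (σ : Equiv.Perm CARConfig) :
    CARSpace →L[ℂ] CARSpace :=
  LinearMap.mkContinuous
    { toFun := fun v => ⟨fun p => w p * v (σ p), memℓp_weighted_comp hw σ v⟩
      map_add' := fun u v => by ext p; exact mul_add _ _ _
      map_smul' := fun c v => by ext p; simp [mul_left_comm] } 1 fun v => by
    have h2 : 0 < (2 : ENNReal).toReal := by norm_num
    have hv := (lp.memℓp v).summable h2
    have hle (p : CARConfig) :
        ‖w p * v (σ p)‖ ^ (2 : ENNReal).toReal ≤ ‖v (σ p)‖ ^ (2 : ENNReal).toReal := by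
      rw [norm_mul]
      gcongr
      exact mul_le_of_le_one_left (norm_nonneg _) (hw p)
    rw [one_mul]
    refine lp.norm_le_of_tsum_le h2 (norm_nonneg _) ?_
    rw [lp.norm_rpow_eq_tsum h2, ← σ.tsum_eq fun p => ‖v p‖ ^ (2 : ENNReal).toReal]
    exact ((memℓp_weighted_comp hw σ v).summable h2).tsum_le_tsum hle
      (hv.comp_injective σ.injective)

/-- Operators given by a weighted involution and the conjugate weight are mutually adjoint. -/
lemma star_eq_of_weighted_involution {X Y : CARSpace →L[ℂ] CARSpace} {w : CARConfig → ℂ}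
    {σ : CARConfig → CARConfig} (hσ : Function.Involutive σ)
    (hX : ∀ v p, X v p = w p * v (σ p)) (hY : ∀ v p, Y v p = conj (w (σ p)) * v (σ p)) :
    star X = Y := by
  rw [ContinuousLinearMap.star_eq_adjoint, eq_comm, ContinuousLinearMap.eq_adjoint_iff]
  intro u v
  rw [lp.inner_eq_tsum, lp.inner_eq_tsum, ← hσ.toPerm.tsum_eq]
  refine tsum_congr fun p => ?_
  simp only [hX, hY, RCLike.inner_apply, map_mul, Function.Involutive.coe_toPerm, hσ p,
    Complex.conj_conj]
  ring

/-! ### Fermionic modes -/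

open scoped Classical in
/-- The annihilation operator of a mode. -/
def ann (i : ℤ ⊕ ℤ) : CARSpace →L[ℂ] CARSpace :=
  weightedComp (fun p => jwSign i p * if occupied i p then 0 else 1)
    (fun p => by split_ifs <;> simp [norm_jwSign])
    (Function.Involutive.toPerm (flipMode i) (flipMode_flipMode i))

open scoped Classical in
/-- The creation operator of a mode. -/
def cre (i : ℤ ⊕ ℤ) : CARSpace →L[ℂ] CARSpace :=
  weightedComp (fun p => jwSign i p * if occupied i p then 1 else 0)
    (fun p => by split_ifs <;> simp [norm_jwSign])
    (Function.Involutive.toPerm (flipMode i) (flipMode_flipMode i))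

/-- The parity operator. -/
def parityOp : CARSpace →L[ℂ] CARSpace :=
  weightedComp paritySign (fun p => by simp [paritySign]) (Equiv.refl _)

open scoped Classical in
lemma ann_apply (i : ℤ ⊕ ℤ) (v : CARSpace) (p : CARConfig) :
    ann i v p = jwSign i p * (if occupied i p then 0 else 1) * v (flipMode i p) := rfl

open scoped Classical in
lemma cre_apply (i : ℤ ⊕ ℤ) (v : CARSpace) (p : CARConfig) :
    cre i v p = jwSign i p * (if occupied i p then 1 else 0) * v (flipMode i p) := rfl

lemma parityOp_apply (v : CARSpace) (p : CARConfig) : parityOp v p = paritySign p * v p := rfl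

lemma star_ann (i : ℤ ⊕ ℤ) : star (ann i) = cre i := by
  classical
  refine star_eq_of_weighted_involution (flipMode_flipMode i) (ann_apply i) fun v p => ?_
  rw [cre_apply, jwSign_flipMode_self, map_mul, conj_jwSign]
  by_cases h : occupied i p <;> simp [h, occupied_flipMode_self]

lemma star_cre (i : ℤ ⊕ ℤ) : star (cre i) = ann i := by
  rw [← star_ann, star_star]

lemma star_parityOp : star parityOp = parityOp :=
  star_eq_of_weighted_involution (σ := id) (fun _ => rfl) parityOp_apply fun v p => by
    simp [parityOp_apply, paritySign]

lemma ann_mul_ann (i j : ℤ ⊕ ℤ) : ann i * ann j = -(ann j * ann i) := by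
  classical
  ext v p
  simp only [mul_apply_eq_comp, neg_apply, lp.coeFn_neg,
    Pi.neg_apply, ann_apply]
  rcases eq_or_ne i j with rfl | hij
  · by_cases h : occupied i p <;> simp [h, occupied_flipMode_self]
  · rw [occupied_flipMode_of_ne hij, occupied_flipMode_of_ne hij.symm, flipMode_comm j i]
    linear_combination ((if occupied i p then 0 else 1) * (if occupied j p then 0 else 1) *
      v (flipMode i (flipMode j p))) * jwSign_mul_jwSign_flipMode hij p

lemma cre_mul_cre (i j : ℤ ⊕ ℤ) : cre i * cre j = -(cre j * cre i) := by
  simpa [star_ann] using congrArg star (ann_mul_ann j i)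

lemma ann_mul_cre_of_ne {i j : ℤ ⊕ ℤ} (hij : i ≠ j) : ann i * cre j = -(cre j * ann i) := by
  classical
  ext v p
  simp only [mul_apply_eq_comp, neg_apply, lp.coeFn_neg,
    Pi.neg_apply, ann_apply, cre_apply]
  rw [occupied_flipMode_of_ne hij, occupied_flipMode_of_ne hij.symm, flipMode_comm j i]
  linear_combination ((if occupied i p then 0 else 1) * (if occupied j p then 1 else 0) *
    v (flipMode i (flipMode j p))) * jwSign_mul_jwSign_flipMode hij p

lemma ann_mul_cre_self (i : ℤ ⊕ ℤ) : ann i * cre i = 1 - cre i * ann i := by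
  classical
  ext v p
  simp only [mul_apply_eq_comp, sub_apply, lp.coeFn_sub,
    Pi.sub_apply, ann_apply, cre_apply, flipMode_flipMode, jwSign_flipMode_self,
    occupied_flipMode_self, one_apply_eq_self]
  by_cases h : occupied i p <;> simp [h, ← mul_assoc, jwSign_mul_self]

lemma parityOp_mul_ann (i : ℤ ⊕ ℤ) : parityOp * ann i = -(ann i * parityOp) := by
  ext v p
  simp only [mul_apply_eq_comp, neg_apply, lp.coeFn_neg,
    Pi.neg_apply, ann_apply, parityOp_apply, paritySign_flipMode]
  ring

lemma parityOp_mul_cre (i : ℤ ⊕ ℤ) : parityOp * cre i = -(cre i * parityOp) := by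
  have h := congrArg star (parityOp_mul_ann i)
  simp only [star_mul, star_neg, star_ann, star_parityOp] at h
  rw [h, neg_neg]

/-! ### The vacuum -/

lemma carE_apply (p q : CARConfig) : carE p q = if q = p then 1 else 0 := by
  simp [carE, lp.single_apply, Pi.single_apply]

lemma parityOp_carΩ : parityOp carΩ = carΩ := by
  ext p
  by_cases h : p = (∅, ∅) <;> simp [parityOp_apply, carΩ, carE_apply, h, paritySign]

lemma ann_carΩ (i : ℤ ⊕ ℤ) : ann i carΩ = 0 := by
  classical
  ext p
  rw [ann_apply, carΩ, carE_apply]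
  by_cases h : flipMode i p = (∅, ∅)
  · have : occupied i p := by
      rw [← flipMode_flipMode i p, occupied_flipMode_self, h]
      cases i <;> simp [occupied]
    simp [this]
  · simp [h]

/-! ### The quasi-free operators -/

/-- The quasi-free operator `a_l`. -/
def carA (lam : ℤ → ℝ) (l : ℤ) : CARSpace →L[ℂ] CARSpace :=
  (Real.sqrt (1 - lam l) : ℂ) • cre (.inl l) + (Real.sqrt (lam l) : ℂ) • ann (.inr l)

/-- The quasi-free operator `b_l`. -/
def carB (lam : ℤ → ℝ) (l : ℤ) : CARSpace →L[ℂ] CARSpace :=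
  (Real.sqrt (lam l) : ℂ) • cre (.inl l) - (Real.sqrt (1 - lam l) : ℂ) • ann (.inr l)

lemma star_carA (lam : ℤ → ℝ) (l : ℤ) : star (carA lam l) =
    (Real.sqrt (1 - lam l) : ℂ) • ann (.inl l) + (Real.sqrt (lam l) : ℂ) • cre (.inr l) := by
  simp [carA, star_ann, star_cre]

lemma star_carB (lam : ℤ → ℝ) (l : ℤ) : star (carB lam l) =
    (Real.sqrt (lam l) : ℂ) • ann (.inl l) - (Real.sqrt (1 - lam l) : ℂ) • cre (.inr l) := by
  simp [carB, star_ann, star_cre]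

lemma inner_carE (p : CARConfig) (v : CARSpace) : inner ℂ (carE p) v = v p := by
  simp [carE, lp.inner_single_left]

lemma IsCAR_a.eq_carA {lam : ℤ → ℝ} {a : ℤ → CARSpace →L[ℂ] CARSpace} (ha : IsCAR_a lam a)
    (l : ℤ) : a l = carA lam l := by
  classical
  refine star_injective ?_
  rw [star_carA]
  ext v p
  obtain ⟨A, B⟩ := p
  rw [← inner_carE, ContinuousLinearMap.star_eq_adjoint, ContinuousLinearMap.adjoint_inner_right,
    ha, inner_add_left, inner_smul_left, inner_smul_left, inner_carE, inner_carE]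
  simp only [add_apply, smul_apply, lp.coeFn_add, lp.coeFn_smul, Pi.add_apply, Pi.smul_apply,
    ann_apply, cre_apply, smul_eq_mul, jwSign, occupied, flipMode, map_mul, Complex.conj_ofReal,
    map_pow, map_neg, map_one]
  by_cases hA : l ∈ A <;> by_cases hB : l ∈ B <;>
    simp [hA, hB, symmDiff_singleton_of_mem, symmDiff_singleton_of_notMem] <;> ring

lemma carB_mul_carA (lam : ℤ → ℝ) (k l : ℤ) :
    carB lam l * carA lam k = -(carA lam k * carB lam l) := by
  simp only [carA, carB, mul_add, add_mul, mul_sub, sub_mul, smul_mul_smul_comm]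
  rw [cre_mul_cre (.inl l), ann_mul_ann (.inr l), ann_mul_cre_of_ne (i := .inr l) (by simp),
    ann_mul_cre_of_ne (i := .inr k) (by simp)]
  module

lemma carB_mul_star_carA (lam : ℤ → ℝ) (k l : ℤ) :
    carB lam l * star (carA lam k) = -(star (carA lam k) * carB lam l) := by
  rw [star_carA]
  simp only [carB, mul_add, add_mul, mul_sub, sub_mul, smul_mul_smul_comm]
  rw [ann_mul_ann (.inr l), cre_mul_cre (.inl l)]
  rcases eq_or_ne k l with rfl | hkl
  · rw [ann_mul_cre_self, ann_mul_cre_self]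
    module
  · rw [ann_mul_cre_of_ne (i := .inr l) (by simpa using hkl.symm),
      ann_mul_cre_of_ne (i := .inl k) (by simpa using hkl)]
    module

lemma parityOp_mul_carA (lam : ℤ → ℝ) (l : ℤ) :
    parityOp * carA lam l = -(carA lam l * parityOp) := by
  simp only [carA, mul_add, add_mul, mul_smul_comm, smul_mul_assoc, parityOp_mul_ann,
    parityOp_mul_cre]
  module

lemma parityOp_mul_star_carA (lam : ℤ → ℝ) (l : ℤ) :
    parityOp * star (carA lam l) = -(star (carA lam l) * parityOp) := by
  simp only [star_carA, mul_add, add_mul, mul_smul_comm, smul_mul_assoc, parityOp_mul_ann,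
    parityOp_mul_cre]
  module

/-- The product of two elements anticommuting with `z` commutes with `z`. -/
lemma commute_mul_of_anticommute {R : Type*} [Ring R] {x y z : R} (hx : x * z = -(z * x))
    (hy : y * z = -(z * y)) : Commute z (x * y) := by
  rw [Commute, SemiconjBy, mul_assoc, hy, mul_neg, ← mul_assoc, ← mul_assoc, hx, neg_mul, neg_neg]

lemma carB_mul_parityOp_mem_centralizer (lam : ℤ → ℝ) (l : ℤ) :
    carB lam l * parityOp ∈ Set.centralizer
      ({x | ∃ l : ℤ, x = carA lam l} ∪ {x | ∃ l : ℤ, x = star (carA lam l)}) := by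
  rintro _ (⟨k, rfl⟩ | ⟨k, rfl⟩)
  · exact commute_mul_of_anticommute (carB_mul_carA lam k l) (parityOp_mul_carA lam k)
  · exact commute_mul_of_anticommute (carB_mul_star_carA lam k l) (parityOp_mul_star_carA lam k)

lemma star_carB_mul_parityOp_mem_centralizer (lam : ℤ → ℝ) (l : ℤ) :
    star (carB lam l) * parityOp ∈ Set.centralizer
      ({x | ∃ l : ℤ, x = carA lam l} ∪ {x | ∃ l : ℤ, x = star (carA lam l)}) := by
  have h₁ (k : ℤ) := congrArg star (carB_mul_carA lam k l)
  have h₂ (k : ℤ) := congrArg star (carB_mul_star_carA lam k l)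
  simp only [star_mul, star_neg, star_star] at h₁ h₂
  rintro _ (⟨k, rfl⟩ | ⟨k, rfl⟩)
  · exact commute_mul_of_anticommute (by rw [h₂, neg_neg]) (parityOp_mul_carA lam k)
  · exact commute_mul_of_anticommute (by rw [h₁, neg_neg]) (parityOp_mul_star_carA lam k)

/-! ### Coefficients of the image of the vacuum -/

section Coefficients

variable {lam : ℤ → ℝ} {l : ℤ} {T : CARSpace →L[ℂ] CARSpace}

/-- The vacuum relation between `a_l*` and `b_l*` transported by `T`. -/
lemma star_carA_add_star_carB_parityOp (hTA : Commute T (star (carA lam l)))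
    (hTB : Commute T (star (carB lam l) * parityOp)) :
    (Real.sqrt (1 - lam l) : ℂ) • star (carA lam l) (T carΩ) +
      (Real.sqrt (lam l) : ℂ) • star (carB lam l) (parityOp (T carΩ)) = 0 := by
  have h₁ := congrArg (· carΩ) hTA.eq
  have h₂ := congrArg (· carΩ) hTB.eq
  simp only [mul_apply_eq_comp, parityOp_carΩ] at h₁ h₂
  rw [← h₁, ← h₂, ← map_smul T, ← map_smul T, ← map_add]
  convert map_zero T
  rw [star_carA, star_carB]
  simp only [add_apply, sub_apply, smul_apply, ann_carΩ]
  module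

/-- The vacuum relation between `a_l` and `b_l` transported by `T`. -/
lemma carA_sub_carB_parityOp (hTA : Commute T (carA lam l))
    (hTB : Commute T (carB lam l * parityOp)) :
    (Real.sqrt (lam l) : ℂ) • carA lam l (T carΩ) -
      (Real.sqrt (1 - lam l) : ℂ) • carB lam l (parityOp (T carΩ)) = 0 := by
  have h₁ := congrArg (· carΩ) hTA.eq
  have h₂ := congrArg (· carΩ) hTB.eq
  simp only [mul_apply_eq_comp, parityOp_carΩ] at h₁ h₂
  rw [← h₁, ← h₂, ← map_smul T, ← map_smul T, ← map_sub]
  convert map_zero T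
  rw [carA, carB]
  simp only [add_apply, sub_apply, smul_apply, ann_carΩ]
  module

lemma sq_sqrt_lam (h0 : 0 ≤ lam l) : (Real.sqrt (lam l) : ℂ) ^ 2 = lam l := by
  rw [← Complex.ofReal_pow, Real.sq_sqrt h0]

lemma sq_sqrt_one_sub_lam (h1 : lam l ≤ 1) : (Real.sqrt (1 - lam l) : ℂ) ^ 2 = 1 - lam l := by
  rw [← Complex.ofReal_pow, Real.sq_sqrt (sub_nonneg.2 h1)]
  simp

/-- Even coefficients vanish when `l` is occupied in the first component. -/
lemma coeff_eq_zero_of_mem_left (h0 : 0 ≤ lam l) (h1 : lam l ≤ 1)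
    (hTA : Commute T (star (carA lam l))) (hTB : Commute T (star (carB lam l) * parityOp))
    {p : CARConfig} (hp : paritySign p = 1) (hl : l ∈ p.1) : T carΩ p = 0 := by
  classical
  have h := congrArg (fun v : CARSpace => v (flipMode (.inl l) p))
    (star_carA_add_star_carB_parityOp hTA hTB)
  have hocc : occupied (.inl l) p := hl
  simp only [star_carA, star_carB, add_apply, sub_apply, smul_apply, lp.coeFn_add, lp.coeFn_sub,
    lp.coeFn_smul, Pi.add_apply, Pi.sub_apply, Pi.smul_apply, ann_apply, cre_apply, smul_eq_mul,
    parityOp_apply, paritySign_flipMode, flipMode_flipMode, occupied_flipMode_self, hocc, hp,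
    jwSign_flipMode_self, lp.coeFn_zero, Pi.zero_apply, not_true_eq_false, if_false, neg_neg] at h
  linear_combination jwSign (.inl l) p * h - T carΩ p * jwSign_mul_self (.inl l) p -
    T carΩ p * jwSign (.inl l) p ^ 2 * (sq_sqrt_lam h0 + sq_sqrt_one_sub_lam h1)

/-- Even coefficients vanish when `l` is occupied in the second component. -/
lemma coeff_eq_zero_of_mem_right (h0 : 0 ≤ lam l) (h1 : lam l ≤ 1)
    (hTA : Commute T (carA lam l)) (hTB : Commute T (carB lam l * parityOp))
    {p : CARConfig} (hp : paritySign p = 1) (hl : l ∈ p.2) : T carΩ p = 0 := by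
  classical
  have h := congrArg (fun v : CARSpace => v (flipMode (.inr l) p))
    (carA_sub_carB_parityOp hTA hTB)
  have hocc : occupied (.inr l) p := hl
  simp only [carA, carB, add_apply, sub_apply, smul_apply, lp.coeFn_add, lp.coeFn_sub,
    lp.coeFn_smul, Pi.add_apply, Pi.sub_apply, Pi.smul_apply, ann_apply, cre_apply, smul_eq_mul,
    parityOp_apply, paritySign_flipMode, flipMode_flipMode, occupied_flipMode_self, hocc, hp,
    jwSign_flipMode_self, lp.coeFn_zero, Pi.zero_apply, not_true_eq_false, if_false, neg_neg] at h
  linear_combination jwSign (.inr l) p * h - T carΩ p * jwSign_mul_self (.inr l) p -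
    T carΩ p * jwSign (.inr l) p ^ 2 * (sq_sqrt_lam h0 + sq_sqrt_one_sub_lam h1)

/-- Occupying `l` in both components of an odd configuration rescales the coefficient. -/
lemma norm_coeff_flipMode_flipMode (h0 : 0 ≤ lam l) (h1 : lam l ≤ 1)
    (hTA : Commute T (star (carA lam l))) (hTB : Commute T (star (carB lam l) * parityOp))
    {p : CARConfig} (hp : paritySign p = -1) (hl₁ : l ∉ p.1) (hl₂ : l ∉ p.2) :
    |1 - 2 * lam l| * ‖T carΩ (flipMode (.inl l) (flipMode (.inr l) p))‖ =
      2 * (Real.sqrt (1 - lam l) * Real.sqrt (lam l)) * ‖T carΩ p‖ := by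
  classical
  have h := congrArg (fun v : CARSpace => v (flipMode (.inr l) p))
    (star_carA_add_star_carB_parityOp hTA hTB)
  have hocc₁ : ¬ occupied (.inl l) p := hl₁
  have hocc₂ : ¬ occupied (.inr l) p := hl₂
  have hne : (Sum.inl l : ℤ ⊕ ℤ) ≠ .inr l := by simp
  simp only [star_carA, star_carB, add_apply, sub_apply, smul_apply, lp.coeFn_add, lp.coeFn_sub,
    lp.coeFn_smul, Pi.add_apply, Pi.sub_apply, Pi.smul_apply, ann_apply, cre_apply, smul_eq_mul,
    parityOp_apply, paritySign_flipMode, flipMode_flipMode, occupied_flipMode_self,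
    occupied_flipMode_of_ne hne, hocc₁, hocc₂, hp, jwSign_flipMode_self, lp.coeFn_zero,
    Pi.zero_apply, not_false_eq_true, if_true, if_false, neg_neg] at h
  have key : ((1 - 2 * lam l : ℝ) : ℂ) * (jwSign (.inl l) (flipMode (.inr l) p) *
      T carΩ (flipMode (.inl l) (flipMode (.inr l) p))) =
      -((2 * (Real.sqrt (1 - lam l) * Real.sqrt (lam l)) : ℝ) : ℂ) *
        (jwSign (.inr l) p * T carΩ p) := by
    push_cast
    linear_combination h - jwSign (.inl l) (flipMode (.inr l) p) *
      T carΩ (flipMode (.inl l) (flipMode (.inr l) p)) *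
        (sq_sqrt_one_sub_lam h1 - sq_sqrt_lam h0)
  have hnorm := congrArg norm key
  simp only [norm_mul, norm_neg, norm_jwSign, one_mul, Complex.norm_real] at hnorm
  rwa [Real.norm_eq_abs, Real.norm_of_nonneg (Real.sqrt_nonneg _),
    Real.norm_of_nonneg (Real.sqrt_nonneg _), Real.norm_of_nonneg zero_le_two] at hnorm

end Coefficients

/-- A vector of `ℓ²` has no coefficient dominated by those of infinitely many configurations. -/
lemma coeff_eq_zero_of_frequently_le {v : CARSpace} {p : CARConfig} {δ : ℝ} (hδ : 0 < δ)
    {f : ℤ → CARConfig} {s : Set ℤ} (hs : s.Infinite) (hf : Set.InjOn f s)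
    (hle : ∀ l ∈ s, δ * ‖v p‖ ≤ ‖v (f l)‖) : v p = 0 := by
  by_contra hv
  have hpos : 0 < δ * ‖v p‖ := mul_pos hδ (norm_pos_iff.2 hv)
  have hsum := (lp.memℓp v).summable (by norm_num)
  have hev := hsum.tendsto_cofinite_zero.eventually
    (gt_mem_nhds (Real.rpow_pos_of_pos hpos (2 : ENNReal).toReal))
  refine hs.image hf ((Filter.eventually_cofinite.1 hev).subset ?_)
  rintro _ ⟨l, hl, rfl⟩
  simp only [Set.mem_ofPred_eq, not_lt]
  gcongr
  exact hle l hl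

lemma mem_pastSpan_of_coeff {v : CARSpace}
    (h : ∀ A B : Finset ℤ, v (A, B) ≠ 0 →
      (∀ n ∈ A, n < 0) ∧ (∀ n ∈ B, n < 0) ∧ A.card % 2 = B.card % 2) : v ∈ pastSpan := by
  rw [pastSpan, ← Submodule.topologicalClosure_coe, SetLike.mem_coe]
  refine (Submodule.isClosed_topologicalClosure _).mem_of_tendsto
    (lp.hasSum_single (by norm_num) v) (.of_forall fun s => Submodule.sum_mem _ fun p _ => ?_)
  by_cases hp : v p = 0
  · simp [hp]
  · have hE : lp.single 2 p (v p) = v p • carE p := by simp [carE, ← lp.single_smul]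
    rw [hE]
    obtain ⟨hA, hB, hc⟩ := h p.1 p.2 hp
    exact Submodule.smul_mem _ _ (Submodule.le_topologicalClosure _
      (Submodule.subset_span ⟨p.1, p.2, hA, hB, hc, rfl⟩))

/-- with past `P = {n < 0}` and future `F = {n ≥ 0}`, assume
`ε ≤ λ_l ≤ 1−ε`, `λ_l ≠ 1/2` for all `l`, with `0 < ε < 1/2`. Let
`S = {a_l} ∪ {a_l*} ⊆ B(H)`, `S′` its commutant and `S″` the commutant of `S′`. If
`T ∈ B(H)` commutes with `a_l` and `a_l*` for every `l ∈ F = {n ≥ 0}` and `T ∈ S″`, then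
`TΩ` belongs to the closed linear span of
`{e_{(A,B)} : A, B ⊆ P finite, card A ≡ card B (mod 2)}`. -/
theorem stmt17 (lam : ℤ → ℝ) (ε : ℝ) (hε : 0 < ε ∧ ε < 1 / 2)
    (hlam : ∀ l : ℤ, ε ≤ lam l ∧ lam l ≤ 1 - ε ∧ lam l ≠ 1 / 2)
    (a : ℤ → CARSpace →L[ℂ] CARSpace) (ha : IsCAR_a lam a)
    (T : CARSpace →L[ℂ] CARSpace)
    (hTcomm : ∀ l : ℤ, 0 ≤ l → T * a l = a l * T ∧ T * star (a l) = star (a l) * T)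
    (hTmem : T ∈ Set.centralizer (Set.centralizer
      ({x | ∃ l : ℤ, x = a l} ∪ {x | ∃ l : ℤ, x = star (a l)}))) :
    T carΩ ∈ pastSpan := by
  have ha' (l : ℤ) : a l = carA lam l := ha.eq_carA l
  simp only [ha'] at hTcomm hTmem
  have hTB (l : ℤ) : Commute T (carB lam l * parityOp) :=
    (hTmem _ (carB_mul_parityOp_mem_centralizer lam l)).symm
  have hTB' (l : ℤ) : Commute T (star (carB lam l) * parityOp) :=
    (hTmem _ (star_carB_mul_parityOp_mem_centralizer lam l)).symm
  have h0 (l : ℤ) : 0 ≤ lam l := hε.1.le.trans (hlam l).1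
  have h1 (l : ℤ) : lam l ≤ 1 := by linarith [(hlam l).2.1, hε.1]
  refine mem_pastSpan_of_coeff fun A B hne => ?_
  rcases paritySign_eq_one_or (A, B) with hp | hp
  · refine ⟨fun n hn => ?_, fun n hn => ?_, ?_⟩
    · by_contra! h
      exact hne (coeff_eq_zero_of_mem_left (h0 n) (h1 n) (hTcomm n h).2 (hTB' n) hp hn)
    · by_contra! h
      exact hne (coeff_eq_zero_of_mem_right (h0 n) (h1 n) (hTcomm n h).1 (hTB n) hp hn)
    · have heven : Even (A.card + B.card) := (neg_one_pow_eq_one_iff_even (by norm_num)).1 hp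
      rw [Nat.even_iff] at heven
      omega
  · refine absurd (coeff_eq_zero_of_frequently_le (δ := 2 * ε) (by linarith [hε.1])
      (s := Set.Ici 0 \ (A ∪ B : Finset ℤ))
      (f := fun l => flipMode (.inl l) (flipMode (.inr l) (A, B)))
      ((Set.Ici_infinite 0).sdiff (Finset.finite_toSet _)) ?_ ?_) hne
    · intro k _ l _ h
      have : ({k} : Finset ℤ) = {l} := symmDiff_right_injective A (congrArg Prod.fst h)
      simpa using this
    · rintro l ⟨hl, hAB⟩
      simp only [Finset.coe_union, Set.mem_union, Finset.mem_coe, not_or] at hAB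
      have h := norm_coeff_flipMode_flipMode (h0 l) (h1 l) (hTcomm l hl).2 (hTB' l) hp hAB.1 hAB.2
      have hs : |1 - 2 * lam l| ≤ 1 := abs_le.2 ⟨by linarith [h1 l], by linarith [h0 l]⟩
      have ht : ε ≤ Real.sqrt (1 - lam l) * Real.sqrt (lam l) := by
        rw [← Real.sqrt_mul (sub_nonneg.2 (h1 l))]
        refine Real.le_sqrt_of_sq_le ?_
        nlinarith [(hlam l).1, (hlam l).2.1, hε.1]
      calc 2 * ε * ‖T carΩ (A, B)‖
          ≤ 2 * (Real.sqrt (1 - lam l) * Real.sqrt (lam l)) * ‖T carΩ (A, B)‖ := by gcongr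
        _ = _ := h.symm
        _ ≤ _ := mul_le_of_le_one_left (norm_nonneg _) hs

end
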